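/- arXiv:2010.01249 — 4 statements merged into one kernel-verified Lean document; each statement's English description precedes it below -/
import Mathlib

section
/- Fix ω0 ∈ ℝ, σ0² > 0, 0 < σH² < σL², and h ∈ (0,1). Define p(s) := h·φ(s; ω0, σH²+σ0²) / (h·φ(s; ω0, σH²+σ0²) + (1−h)·φ(s; ω0, σL²+σ0²)). For q ∈ {H, L} and r ∈ (0,∞), define D_{r,q}(ω) := ∫_{ω0−r}^{ω0+r} φ(t; ω, σq²) dt and a_q*(s,r) := (∫ ω·φ(s; ω, σq²)·φ(ω; ω0, σ0²)/D_{r,q}(ω) dω) / (∫ φ(s; ω, σq²)·φ(ω; ω0, σ0²)/D_{r,q}(ω) dω), and set a*(s,r) := p(s)·a_H*(s,r) + (1−p(s))·a_L*(s,r). Then for every signal s and radii r, r′ with ω0 < s < ω0 + r and r < r′ < ∞, we have a*(s, r′) < a*(s, r). -/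
open MeasureTheory Real Filter

/-- The Gaussian density with mean `m` and variance `v`. -/
noncomputable def gauss (x m v : ℝ) : ℝ :=
  (Real.sqrt (2 * Real.pi * v))⁻¹ * Real.exp (-(x - m) ^ 2 / (2 * v))

/-- `p(s)`: the posterior probability of a high-quality source given signal `s`
(independent of the censoring radius). -/
noncomputable def pHigh (ω0 v0 vH vL h s : ℝ) : ℝ :=
  h * gauss s ω0 (vH + v0) /
    (h * gauss s ω0 (vH + v0) + (1 - h) * gauss s ω0 (vL + v0))

/-- `D_{r,q}(ω)`: the probability of the window `[ω0−r, ω0+r]` under a type-`q` signal. -/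
noncomputable def winProbQ (ω0 vq r ω : ℝ) : ℝ :=
  ∫ t in Set.Icc (ω0 - r) (ω0 + r), gauss t ω vq

/-- `a_q*(s,r)`: the censored posterior-mean action when the source quality is known. -/
noncomputable def aQ (ω0 v0 vq r s : ℝ) : ℝ :=
  (∫ ω : ℝ, ω * (gauss s ω vq * gauss ω ω0 v0 / winProbQ ω0 vq r ω)) /
    (∫ ω : ℝ, gauss s ω vq * gauss ω ω0 v0 / winProbQ ω0 vq r ω)

/-- `a*(s,r)`: the optimal action, a convex combination of the quality-specific actions. -/
noncomputable def aOpt (ω0 v0 vH vL h r s : ℝ) : ℝ :=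
  pHigh ω0 v0 vH vL h s * aQ ω0 v0 vH r s +
    (1 - pHigh ω0 v0 vH vL h s) * aQ ω0 v0 vL r s

/-! Measured from the prior mean, the posterior for a known quality is the prior times
`exp (c x) / W_r x`, where `c > 0` and `W_r` is the truncated `cosh` transform of a centred
Gaussian. Folding `x` and `-x` together, its mean is the average of `x tanh (c x)`, an increasing
function of `|x|`, under the weight `cosh (c x) / W_r x`. Enlarging `r` multiplies this weight by
`W_r / W_r'`, which decreases in `|x|` because `(t, x) ↦ cosh (t x)` is strictly totally positive of
order two for `t, x ≥ 0`, so by Chebyshev's integral inequality the average drops. -/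

section IntegralInequalities

variable {α β : Type*} [MeasurableSpace α] [MeasurableSpace β] {μ : Measure α} {ν : Measure β}

lemma integral_pos_of_ae_pos [NeZero μ] {f : α → ℝ} (hf : Integrable f μ)
    (hpos : ∀ᵐ x ∂μ, 0 < f x) : 0 < ∫ x, f x ∂μ := by
  refine (integral_nonneg_of_ae (hpos.mono fun _ ↦ le_of_lt)).lt_of_ne' fun hzero ↦ ?_
  rw [integral_eq_zero_iff_of_nonneg_ae (hpos.mono fun _ ↦ le_of_lt) hf] at hzero
  obtain ⟨x, hx, hx'⟩ := (hpos.and hzero).exists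
  exact hx.ne' hx'

lemma neZero_prod (μ : Measure α) (ν : Measure β) [SFinite ν] [NeZero μ] [NeZero ν] :
    NeZero (μ.prod ν) :=
  ⟨fun hzero ↦ by
    have huniv := Measure.prod_prod (μ := μ) (ν := ν) Set.univ Set.univ
    simp [hzero, NeZero.ne] at huniv⟩

lemma integral_mul_integral_lt_of_ae_prod [SFinite μ] [SFinite ν] [NeZero μ] [NeZero ν]
    {f₁ f₂ : α → ℝ} {g₁ g₂ : β → ℝ} (hf₁ : Integrable f₁ μ) (hf₂ : Integrable f₂ μ)
    (hg₁ : Integrable g₁ ν) (hg₂ : Integrable g₂ ν)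
    (hlt : ∀ᵐ p ∂μ.prod ν, f₁ p.1 * g₁ p.2 < f₂ p.1 * g₂ p.2) :
    (∫ x, f₁ x ∂μ) * ∫ y, g₁ y ∂ν < (∫ x, f₂ x ∂μ) * ∫ y, g₂ y ∂ν := by
  have := neZero_prod μ ν
  rw [← sub_pos, ← integral_prod_mul, ← integral_prod_mul,
    ← integral_sub (hf₂.mul_prod hg₂) (hf₁.mul_prod hg₁)]
  exact integral_pos_of_ae_pos ((hf₂.mul_prod hg₂).sub (hf₁.mul_prod hg₁))
    (hlt.mono fun _ ↦ sub_pos.2)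

/- Chebyshev's integral inequality: the difference of the cross products is half the integral of
`(f x - f y) * (w₂ x * w₁ y - w₂ y * w₁ x)` over the product space. -/
lemma weighted_mean_lt_weighted_mean [SFinite μ] [NeZero μ]
    {f w₁ w₂ : α → ℝ} (hw₁ : Integrable w₁ μ) (hw₂ : Integrable w₂ μ)
    (hfw₁ : Integrable (fun x ↦ f x * w₁ x) μ) (hfw₂ : Integrable (fun x ↦ f x * w₂ x) μ)
    (hw₁_pos : ∀ x, 0 < w₁ x) (hw₂_pos : ∀ x, 0 < w₂ x)
    (hmono : ∀ᵐ p ∂μ.prod μ, 0 < (f p.1 - f p.2) * (w₂ p.1 / w₁ p.1 - w₂ p.2 / w₁ p.2)) :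
    (∫ x, f x * w₁ x ∂μ) / ∫ x, w₁ x ∂μ < (∫ x, f x * w₂ x ∂μ) / ∫ x, w₂ x ∂μ := by
  rw [div_lt_div_iff₀ (integral_pos_of_ae_pos hw₁ (.of_forall hw₁_pos))
    (integral_pos_of_ae_pos hw₂ (.of_forall hw₂_pos))]
  have hint₂ : Integrable (fun p : α × α ↦
      f p.1 * w₂ p.1 * w₁ p.2 + w₁ p.1 * (f p.2 * w₂ p.2)) (μ.prod μ) :=
    (hfw₂.mul_prod hw₁).add (hw₁.mul_prod hfw₂)
  have hint₁ : Integrable (fun p : α × α ↦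
      f p.1 * w₁ p.1 * w₂ p.2 + w₂ p.1 * (f p.2 * w₁ p.2)) (μ.prod μ) :=
    (hfw₁.mul_prod hw₂).add (hw₂.mul_prod hfw₁)
  have := neZero_prod μ μ
  have hpos : 0 < ∫ p, ((f p.1 * w₂ p.1 * w₁ p.2 + w₁ p.1 * (f p.2 * w₂ p.2)) -
      (f p.1 * w₁ p.1 * w₂ p.2 + w₂ p.1 * (f p.2 * w₁ p.2))) ∂μ.prod μ := by
    refine integral_pos_of_ae_pos (hint₂.sub hint₁) (hmono.mono fun p hp ↦ ?_)
    have hw₁_ne (x : α) := (hw₁_pos x).ne'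
    calc 0 < w₁ p.1 * w₁ p.2 * ((f p.1 - f p.2) * (w₂ p.1 / w₁ p.1 - w₂ p.2 / w₁ p.2)) :=
          mul_pos (mul_pos (hw₁_pos _) (hw₁_pos _)) hp
      _ = _ := by field [hw₁_ne p.1, hw₁_ne p.2]
  rw [integral_sub hint₂ hint₁, integral_add (hfw₂.mul_prod hw₁) (hw₁.mul_prod hfw₂),
    integral_add (hfw₁.mul_prod hw₂) (hw₂.mul_prod hfw₁),
    integral_prod_mul (fun x ↦ f x * w₂ x) w₁, integral_prod_mul w₁ (fun x ↦ f x * w₂ x),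
    integral_prod_mul (fun x ↦ f x * w₁ x) w₂, integral_prod_mul w₂ (fun x ↦ f x * w₁ x)] at hpos
  linarith

end IntegralInequalities

section Even

lemma even_apply_abs {f : ℝ → ℝ} (hf : Function.Even f) (x : ℝ) : f |x| = f x := by
  rcases abs_choice x with h | h <;> simp [h, hf x]

lemma sub_mul_sub_pos_of_even_of_strictMonoOn {f g : ℝ → ℝ} (hf : Function.Even f)
    (hg : Function.Even g) (hf_mono : StrictMonoOn f (Set.Ici 0))
    (hg_mono : StrictMonoOn g (Set.Ici 0)) {x y : ℝ} (hxy : |x| ≠ |y|) :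
    0 < (f x - f y) * (g x - g y) := by
  rw [← even_apply_abs hf x, ← even_apply_abs hf y, ← even_apply_abs hg x, ← even_apply_abs hg y]
  rcases hxy.lt_or_gt with h | h
  · exact mul_pos_of_neg_of_neg (sub_neg.2 (hf_mono (abs_nonneg x) (abs_nonneg y) h))
      (sub_neg.2 (hg_mono (abs_nonneg x) (abs_nonneg y) h))
  · exact mul_pos (sub_pos.2 (hf_mono (abs_nonneg y) (abs_nonneg x) h))
      (sub_pos.2 (hg_mono (abs_nonneg y) (abs_nonneg x) h))

lemma ae_prod_abs_ne_abs (μ ν : Measure ℝ) [SFinite ν] [NullSingletonClass ν] :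
    ∀ᵐ p ∂μ.prod ν, |p.1| ≠ |p.2| := by
  have hmeas : MeasurableSet {p : ℝ × ℝ | |p.1| = |p.2|} :=
    measurableSet_eq_fun (by fun_prop) (by fun_prop)
  refine (Measure.ae_prod_iff_ae_ae hmeas.compl).2 (.of_forall fun x ↦ ?_)
  filter_upwards [Measure.ae_ne ν x, Measure.ae_ne ν (-x)] with y hy hy'
  exact abs_eq_abs.not.2 (by grind)

lemma intervalIntegral_neg_self_eq {f : ℝ → ℝ} (a : ℝ) (hf : Continuous f) :
    ∫ t in -a..a, f t = ∫ t in 0..a, (f t + f (-t)) := by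
  rw [intervalIntegral.integral_add (hf.intervalIntegrable 0 a)
      (Continuous.intervalIntegrable (by fun_prop) 0 a),
    intervalIntegral.integral_comp_neg, neg_zero, add_comm,
    intervalIntegral.integral_add_adjacent_intervals (hf.intervalIntegrable _ _)
      (hf.intervalIntegrable _ _)]

variable {μ : Measure ℝ} [μ.IsNegInvariant] {f : ℝ → ℝ}

lemma integrable_add_neg_div_two (hf : Integrable f μ) :
    Integrable (fun x ↦ (f x + f (-x)) / 2) μ :=
  (hf.add hf.comp_neg).div_const 2

lemma integral_add_neg_div_two (hf : Integrable f μ) :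
    ∫ x, (f x + f (-x)) / 2 ∂μ = ∫ x, f x ∂μ := by
  rw [integral_div, integral_add hf hf.comp_neg, integral_neg_eq_self]
  ring

end Even

section Hyperbolic

lemma strictMonoOn_mul_tanh {c : ℝ} (hc : 0 < c) :
    StrictMonoOn (fun x ↦ x * tanh (c * x)) (Set.Ici 0) := by
  intro x hx y _ hxy
  have hsub : 0 < sinh (c * y - c * x) := sinh_pos_iff.2 (by nlinarith)
  have htanh : tanh (c * x) < tanh (c * y) := by
    rw [tanh_eq_sinh_div_cosh, tanh_eq_sinh_div_cosh, div_lt_div_iff₀ (cosh_pos _) (cosh_pos _)]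
    rw [sinh_sub] at hsub
    linarith
  have htanh_nonneg : 0 ≤ tanh (c * x) := by
    rw [tanh_eq_sinh_div_cosh]
    exact div_nonneg (sinh_nonneg_iff.2 (mul_nonneg hc.le hx)) (cosh_pos _).le
  exact mul_lt_mul'' hxy htanh hx htanh_nonneg

lemma cosh_mul_mul_cosh_mul_lt {a b x y : ℝ} (ha : 0 ≤ a) (hab : a < b) (hx : 0 ≤ x)
    (hxy : x < y) : cosh (b * x) * cosh (a * y) < cosh (b * y) * cosh (a * x) := by
  have hb : 0 ≤ b := ha.trans hab.le
  have hy : 0 ≤ y := hx.trans hxy.le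
  have hdet : 0 < (b - a) * (y - x) := mul_pos (sub_pos.2 hab) (sub_pos.2 hxy)
  have hadd : cosh (b * x + a * y) < cosh (b * y + a * x) := by
    rw [cosh_lt_cosh, abs_of_nonneg (add_nonneg (mul_nonneg hb hx) (mul_nonneg ha hy)),
      abs_of_nonneg (add_nonneg (mul_nonneg hb hy) (mul_nonneg ha hx))]
    linarith
  have hsub : cosh (b * x - a * y) ≤ cosh (b * y - a * x) :=
    cosh_le_cosh.2 (abs_le_abs (by nlinarith) (by nlinarith))
  rw [cosh_add, cosh_add] at hadd
  rw [cosh_sub, cosh_sub] at hsub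
  linarith

end Hyperbolic

section TiltedMean

/-- The mean of the probability measure whose density with respect to `μ` is proportional to the
exponentially tilted weight `x ↦ exp (c * x) * w x`. -/
noncomputable def tiltedMean (μ : Measure ℝ) (c : ℝ) (w : ℝ → ℝ) : ℝ :=
  (∫ x, x * (exp (c * x) * w x) ∂μ) / ∫ x, exp (c * x) * w x ∂μ

variable {μ : Measure ℝ} {c : ℝ} {w w₁ w₂ : ℝ → ℝ}

lemma add_neg_div_two_exp_mul (hw : Function.Even w) (x : ℝ) :
    (exp (c * x) * w x + exp (c * -x) * w (-x)) / 2 = cosh (c * x) * w x := by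
  rw [hw x, cosh_eq, mul_neg]
  ring

lemma add_neg_div_two_mul_exp_mul (hw : Function.Even w) (x : ℝ) :
    (x * (exp (c * x) * w x) + -x * (exp (c * -x) * w (-x))) / 2 =
      x * tanh (c * x) * (cosh (c * x) * w x) := by
  have htanh : tanh (c * x) * cosh (c * x) = sinh (c * x) := by
    rw [tanh_eq_sinh_div_cosh, div_mul_cancel₀ _ (cosh_pos _).ne']
  calc (x * (exp (c * x) * w x) + -x * (exp (c * -x) * w (-x))) / 2
      = x * sinh (c * x) * w x := by rw [hw x, sinh_eq, mul_neg]; ring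
    _ = x * tanh (c * x) * (cosh (c * x) * w x) := by rw [← htanh]; ring

lemma tiltedMean_eq_of_even [μ.IsNegInvariant] (hw : Function.Even w)
    (hint : Integrable (fun x ↦ exp (c * x) * w x) μ)
    (hint' : Integrable (fun x ↦ x * (exp (c * x) * w x)) μ) :
    tiltedMean μ c w = (∫ x, x * tanh (c * x) * (cosh (c * x) * w x) ∂μ) /
      ∫ x, cosh (c * x) * w x ∂μ := by
  rw [tiltedMean, ← integral_add_neg_div_two hint, ← integral_add_neg_div_two hint']
  simp_rw [add_neg_div_two_exp_mul hw, add_neg_div_two_mul_exp_mul hw]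

theorem tiltedMean_lt_tiltedMean [SFinite μ] [NeZero μ] [NullSingletonClass μ] [μ.IsNegInvariant]
    (hc : 0 < c) (hw₁ : Function.Even w₁) (hw₂ : Function.Even w₂)
    (hw₁_pos : ∀ x, 0 < w₁ x) (hw₂_pos : ∀ x, 0 < w₂ x)
    (hint₁ : Integrable (fun x ↦ exp (c * x) * w₁ x) μ)
    (hint₁' : Integrable (fun x ↦ x * (exp (c * x) * w₁ x)) μ)
    (hint₂ : Integrable (fun x ↦ exp (c * x) * w₂ x) μ)
    (hint₂' : Integrable (fun x ↦ x * (exp (c * x) * w₂ x)) μ)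
    (hmono : StrictMonoOn (fun x ↦ w₂ x / w₁ x) (Set.Ici 0)) :
    tiltedMean μ c w₁ < tiltedMean μ c w₂ := by
  have hf : Function.Even fun x ↦ x * tanh (c * x) := fun x ↦ by simp
  have hg : Function.Even fun x ↦ w₂ x / w₁ x := fun x ↦ by simp only [hw₁ x, hw₂ x]
  rw [tiltedMean_eq_of_even hw₁ hint₁ hint₁', tiltedMean_eq_of_even hw₂ hint₂ hint₂']
  refine weighted_mean_lt_weighted_mean
    (by simpa only [add_neg_div_two_exp_mul hw₁] using integrable_add_neg_div_two hint₁)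
    (by simpa only [add_neg_div_two_exp_mul hw₂] using integrable_add_neg_div_two hint₂)
    (by simpa only [add_neg_div_two_mul_exp_mul hw₁] using integrable_add_neg_div_two hint₁')
    (by simpa only [add_neg_div_two_mul_exp_mul hw₂] using integrable_add_neg_div_two hint₂')
    (fun x ↦ mul_pos (cosh_pos _) (hw₁_pos x)) (fun x ↦ mul_pos (cosh_pos _) (hw₂_pos x)) ?_
  filter_upwards [ae_prod_abs_ne_abs μ μ] with p hp
  simp_rw [mul_div_mul_left _ _ (cosh_pos _).ne']
  exact sub_mul_sub_pos_of_even_of_strictMonoOn hf hg (strictMonoOn_mul_tanh hc) hmono hp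

end TiltedMean

section CoshTransform

/-- The hyperbolic cosine transform of `ρ` truncated to `[0, r]`. Up to a Gaussian factor, the
probability of a symmetric window is such a transform of the signal density. -/
noncomputable def coshTransform (ρ : ℝ → ℝ) (r x : ℝ) : ℝ :=
  ∫ t in 0..r, ρ t * cosh (t * x)

variable {ρ : ℝ → ℝ} {r r' : ℝ}

lemma coshTransform_even (ρ : ℝ → ℝ) (r : ℝ) : Function.Even (coshTransform ρ r) := fun x ↦ by
  simp only [coshTransform, mul_neg, cosh_neg]

lemma continuous_coshTransform (hρ : Continuous ρ) (r : ℝ) : Continuous (coshTransform ρ r) := by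
  refine intervalIntegral.continuous_parametric_intervalIntegral_of_continuous' ?_ 0 r
  simp only [Function.uncurry_def]
  fun_prop

lemma coshTransform_pos (hρ : Continuous ρ) (hρ_pos : ∀ t, 0 < ρ t) (hr : 0 < r) (x : ℝ) :
    0 < coshTransform ρ r x :=
  intervalIntegral.intervalIntegral_pos_of_pos (Continuous.intervalIntegrable (by fun_prop) _ _)
    (fun t ↦ mul_pos (hρ_pos t) (cosh_pos _)) hr

lemma coshTransform_zero_le (hρ : Continuous ρ) (hρ_pos : ∀ t, 0 < ρ t) (hr : 0 ≤ r) (x : ℝ) :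
    coshTransform ρ r 0 ≤ coshTransform ρ r x := by
  refine intervalIntegral.integral_mono hr (Continuous.intervalIntegrable (by fun_prop) _ _)
    (Continuous.intervalIntegrable (by fun_prop) _ _) fun t ↦ ?_
  have := hρ_pos t
  dsimp only
  gcongr
  simp

lemma integral_mul_coshTransform_lt (hρ : Continuous ρ) (hρ_pos : ∀ t, 0 < ρ t) (hr : 0 < r)
    (hrr' : r < r') {x y : ℝ} (hx : 0 ≤ x) (hxy : x < y) :
    (∫ t in r..r', ρ t * cosh (t * x)) * coshTransform ρ r y <
      (∫ t in r..r', ρ t * cosh (t * y)) * coshTransform ρ r x := by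
  have hint (a b z : ℝ) : IntegrableOn (fun t ↦ ρ t * cosh (t * z)) (Set.Ioc a b) :=
    (Continuous.integrableOn_Icc (by fun_prop)).mono_set Set.Ioc_subset_Icc_self
  have hne {a b : ℝ} (hab : a < b) : volume.restrict (Set.Ioc a b) ≠ 0 := by simpa using hab
  have : NeZero (volume.restrict (Set.Ioc r r')) := ⟨hne hrr'⟩
  have : NeZero (volume.restrict (Set.Ioc 0 r)) := ⟨hne hr⟩
  simp only [coshTransform, intervalIntegral.integral_of_le hr.le,
    intervalIntegral.integral_of_le hrr'.le]
  refine integral_mul_integral_lt_of_ae_prod (hint _ _ _) (hint _ _ _) (hint _ _ _) (hint _ _ _) ?_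
  rw [Measure.prod_restrict]
  filter_upwards [ae_restrict_mem (measurableSet_Ioc.prod measurableSet_Ioc)] with p ⟨hb, ha⟩
  have hcosh := cosh_mul_mul_cosh_mul_lt ha.1.le (ha.2.trans_lt hb.1) hx hxy
  have := mul_lt_mul_of_pos_left hcosh (mul_pos (hρ_pos p.1) (hρ_pos p.2))
  linarith

lemma strictMonoOn_coshTransform_div (hρ : Continuous ρ) (hρ_pos : ∀ t, 0 < ρ t) (hr : 0 < r)
    (hrr' : r < r') :
    StrictMonoOn (fun x ↦ coshTransform ρ r' x / coshTransform ρ r x) (Set.Ici 0) := by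
  intro x hx y _ hxy
  have hsplit (z : ℝ) :
      coshTransform ρ r' z = coshTransform ρ r z + ∫ t in r..r', ρ t * cosh (t * z) :=
    (intervalIntegral.integral_add_adjacent_intervals
      (Continuous.intervalIntegrable (by fun_prop) _ _)
      (Continuous.intervalIntegrable (by fun_prop) _ _)).symm
  have hlt := integral_mul_coshTransform_lt hρ hρ_pos hr hrr' hx hxy
  dsimp only
  rw [div_lt_div_iff₀ (coshTransform_pos hρ hρ_pos hr x) (coshTransform_pos hρ hρ_pos hr y),
    hsplit, hsplit]
  linarith

end CoshTransform

section Gaussian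

open ProbabilityTheory
open scoped NNReal

lemma gauss_pos (x m : ℝ) {v : ℝ} (hv : 0 < v) : 0 < gauss x m v := by
  unfold gauss
  positivity

lemma gauss_add_add (m t x v : ℝ) :
    gauss (m + t) (m + x) v = exp (-x ^ 2 / (2 * v)) * (exp (x / v * t) * gauss t 0 v) := by
  have hexp : -(m + t - (m + x)) ^ 2 / (2 * v) =
      -x ^ 2 / (2 * v) + (x / v * t + -(t - 0) ^ 2 / (2 * v)) := by
    ring
  rw [gauss, gauss, hexp, exp_add, exp_add]
  ring

lemma gauss_neg (t v : ℝ) : gauss (-t) 0 v = gauss t 0 v := by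
  simp [gauss]

lemma continuous_gauss (m v : ℝ) : Continuous (gauss · m v) := by
  unfold gauss
  fun_prop

lemma integral_mul_gauss (f : ℝ → ℝ) (m : ℝ) {v : ℝ≥0} (hv : v ≠ 0) :
    ∫ x, f x * gauss x m v = ∫ x, f (m + x) ∂gaussianReal 0 v := by
  have hmap : (gaussianReal 0 v).map (m + ·) = gaussianReal m v := by
    rw [gaussianReal_map_const_add, zero_add]
  rw [← (measurableEmbedding_addLeft m).integral_map, hmap,
    integral_gaussianReal_eq_integral_smul hv]
  simp only [smul_eq_mul, mul_comm, gauss, gaussianPDFReal]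

lemma isNegInvariant_gaussianReal (v : ℝ≥0) : (gaussianReal 0 v).IsNegInvariant :=
  ⟨by simpa [Measure.neg] using gaussianReal_map_neg (μ := 0) (v := v)⟩

lemma integrable_mul_exp_mul_gaussianReal (m : ℝ) (v : ℝ≥0) (c : ℝ) :
    Integrable (fun x ↦ x * exp (c * x)) (gaussianReal m v) := by
  simpa using integrable_pow_mul_exp_of_mem_interior_integrableExpSet (X := id)
    (μ := gaussianReal m v) (v := c) (by simp [integrableExpSet_id_gaussianReal]) 1

end Gaussian

section CensoredPosterior

open ProbabilityTheory
open scoped NNReal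

/-- The factor `1 / D_{r,q}` that censoring contributes to the posterior, at the displacement `x` of
the state from the prior mean and multiplied by `exp (-x ^ 2 / (2 * v))` so as to cancel the
quadratic part of the likelihood. -/
noncomputable def censoringWeight (v r x : ℝ) : ℝ :=
  (coshTransform (fun t ↦ 2 * gauss t 0 v) r (x / v))⁻¹

variable {v r r' : ℝ}

lemma winProbQ_add (ω0 : ℝ) (v x : ℝ) (hr : 0 ≤ r) :
    winProbQ ω0 v r (ω0 + x) = exp (-x ^ 2 / (2 * v)) * (censoringWeight v r x)⁻¹ := by
  have hcont := continuous_gauss (ω0 + x) v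
  rw [winProbQ, integral_Icc_eq_integral_Ioc, ← intervalIntegral.integral_of_le (by linarith),
    sub_eq_add_neg, ← intervalIntegral.integral_comp_add_left,
    intervalIntegral_neg_self_eq r (by fun_prop), censoringWeight, inv_inv, coshTransform,
    ← intervalIntegral.integral_const_mul]
  congr 1 with t
  rw [gauss_add_add, gauss_add_add, gauss_neg, cosh_eq, mul_neg, mul_comm t (x / v)]
  ring

lemma gauss_div_winProbQ (ω0 s v x : ℝ) (hr : 0 ≤ r) :
    gauss s (ω0 + x) v / winProbQ ω0 v r (ω0 + x) =
      gauss (s - ω0) 0 v * (exp ((s - ω0) / v * x) * censoringWeight v r x) := by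
  have hs : gauss s (ω0 + x) v = exp (-x ^ 2 / (2 * v)) *
      (exp ((s - ω0) / v * x) * gauss (s - ω0) 0 v) := by
    rw [div_mul_comm, ← gauss_add_add, add_sub_cancel]
  rw [winProbQ_add ω0 v x hr, hs, mul_div_mul_left _ _ (exp_pos _).ne', div_inv_eq_mul]
  ring

lemma censoringWeight_even (v r : ℝ) : Function.Even (censoringWeight v r) := fun x ↦ by
  rw [censoringWeight, neg_div, coshTransform_even, censoringWeight]

lemma censoringWeight_pos (hv : 0 < v) (hr : 0 < r) (x : ℝ) : 0 < censoringWeight v r x := by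
  have hcont := continuous_gauss 0 v
  exact inv_pos.2 (coshTransform_pos (by fun_prop)
    (fun t ↦ mul_pos two_pos (gauss_pos t 0 hv)) hr _)

lemma censoringWeight_le (hv : 0 < v) (hr : 0 < r) (x : ℝ) :
    censoringWeight v r x ≤ censoringWeight v r 0 := by
  have hcont := continuous_gauss 0 v
  have hpos (t : ℝ) : 0 < 2 * gauss t 0 v := mul_pos two_pos (gauss_pos t 0 hv)
  rw [censoringWeight, censoringWeight, zero_div]
  exact inv_anti₀ (coshTransform_pos (by fun_prop) hpos hr _)
    (coshTransform_zero_le (by fun_prop) hpos hr.le _)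

lemma measurable_censoringWeight (v r : ℝ) : Measurable (censoringWeight v r) := by
  have hcont := continuous_gauss 0 v
  have := (continuous_coshTransform (ρ := fun t ↦ 2 * gauss t 0 v) (by fun_prop) r).measurable
  unfold censoringWeight
  fun_prop

lemma strictMonoOn_censoringWeight_div (hv : 0 < v) (hr : 0 < r) (hrr' : r < r') :
    StrictMonoOn (fun x ↦ censoringWeight v r x / censoringWeight v r' x) (Set.Ici 0) := by
  have hcont := continuous_gauss 0 v
  have hmono := strictMonoOn_coshTransform_div (ρ := fun t ↦ 2 * gauss t 0 v) (by fun_prop)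
    (fun t ↦ mul_pos two_pos (gauss_pos t 0 hv)) hr hrr'
  intro x hx y hy hxy
  simp only [censoringWeight, inv_div_inv]
  exact hmono (div_nonneg hx hv.le) (div_nonneg hy hv.le) (div_lt_div_of_pos_right hxy hv)

lemma integrable_mul_censoringWeight {μ : Measure ℝ} {f : ℝ → ℝ} (hf : Integrable f μ)
    (hv : 0 < v) (hr : 0 < r) : Integrable (fun x ↦ f x * censoringWeight v r x) μ :=
  hf.mul_bdd (c := censoringWeight v r 0) (measurable_censoringWeight v r).aestronglyMeasurable
    (.of_forall fun x ↦ by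
      rw [norm_of_nonneg (censoringWeight_pos hv hr x).le]
      exact censoringWeight_le hv hr x)

lemma integrable_exp_mul_censoringWeight (m : ℝ) (v₀ : ℝ≥0) (c : ℝ) (hv : 0 < v) (hr : 0 < r) :
    Integrable (fun x ↦ exp (c * x) * censoringWeight v r x) (gaussianReal m v₀) :=
  integrable_mul_censoringWeight (integrable_exp_mul_gaussianReal c) hv hr

lemma integrable_mul_exp_mul_censoringWeight (m : ℝ) (v₀ : ℝ≥0) (c : ℝ) (hv : 0 < v)
    (hr : 0 < r) :
    Integrable (fun x ↦ x * (exp (c * x) * censoringWeight v r x)) (gaussianReal m v₀) := by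
  simpa only [mul_assoc] using
    integrable_mul_censoringWeight (integrable_mul_exp_mul_gaussianReal m v₀ c) hv hr

lemma aQ_eq_add_tiltedMean (ω0 s : ℝ) {v₀ : ℝ≥0} (hv₀ : v₀ ≠ 0) (hv : 0 < v) (hr : 0 < r) :
    aQ ω0 v₀ v r s =
      ω0 + tiltedMean (gaussianReal 0 v₀) ((s - ω0) / v) (censoringWeight v r) := by
  set c := (s - ω0) / v with hc
  have hint := integrable_exp_mul_censoringWeight 0 v₀ c hv hr
  have hint' := integrable_mul_exp_mul_censoringWeight 0 v₀ c hv hr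
  have hpos : 0 < ∫ x, exp (c * x) * censoringWeight v r x ∂gaussianReal 0 v₀ :=
    integral_pos_of_ae_pos hint
      (.of_forall fun x ↦ mul_pos (exp_pos _) (censoringWeight_pos hv hr x))
  have hden : ∫ ω, gauss s ω v * gauss ω ω0 v₀ / winProbQ ω0 v r ω =
      gauss (s - ω0) 0 v * ∫ x, exp (c * x) * censoringWeight v r x ∂gaussianReal 0 v₀ := by
    simp_rw [mul_div_right_comm]
    rw [integral_mul_gauss _ _ hv₀]
    simp_rw [gauss_div_winProbQ _ _ _ _ hr.le, integral_const_mul, hc]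
  have hnum : ∫ ω, ω * (gauss s ω v * gauss ω ω0 v₀ / winProbQ ω0 v r ω) =
      gauss (s - ω0) 0 v * (ω0 * (∫ x, exp (c * x) * censoringWeight v r x ∂gaussianReal 0 v₀) +
        ∫ x, x * (exp (c * x) * censoringWeight v r x) ∂gaussianReal 0 v₀) := by
    simp_rw [mul_div_right_comm, ← mul_assoc _ _ (gauss _ ω0 v₀)]
    rw [integral_mul_gauss _ _ hv₀, ← integral_const_mul, ← integral_add (hint.const_mul ω0) hint',
      ← integral_const_mul]
    congr 1 with x
    rw [gauss_div_winProbQ _ _ _ _ hr.le]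
    ring
  rw [aQ, hden, hnum, mul_div_mul_left _ _ (gauss_pos _ _ hv).ne', add_div,
    mul_div_cancel_right₀ _ hpos.ne', tiltedMean]

theorem aQ_lt_aQ {ω0 v0 s : ℝ} (hv0 : 0 < v0) (hv : 0 < v) (hs : ω0 < s) (hr : 0 < r)
    (hrr' : r < r') : aQ ω0 v0 v r' s < aQ ω0 v0 v r s := by
  lift v0 to ℝ≥0 using hv0.le
  have hv₀ : v0 ≠ 0 := (NNReal.coe_pos.1 hv0).ne'
  have hr' : 0 < r' := hr.trans hrr'
  have := nullSingletonClass_gaussianReal (μ := 0) hv₀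
  have := isNegInvariant_gaussianReal v0
  rw [aQ_eq_add_tiltedMean ω0 s hv₀ hv hr, aQ_eq_add_tiltedMean ω0 s hv₀ hv hr']
  gcongr
  exact tiltedMean_lt_tiltedMean (div_pos (sub_pos.2 hs) hv)
    (censoringWeight_even v r') (censoringWeight_even v r)
    (censoringWeight_pos hv hr') (censoringWeight_pos hv hr)
    (integrable_exp_mul_censoringWeight 0 v0 _ hv hr')
    (integrable_mul_exp_mul_censoringWeight 0 v0 _ hv hr')
    (integrable_exp_mul_censoringWeight 0 v0 _ hv hr)
    (integrable_mul_exp_mul_censoringWeight 0 v0 _ hv hr)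
    (strictMonoOn_censoringWeight_div hv hr hrr')

end CensoredPosterior

lemma pHigh_mem_Icc {v0 vH vL h : ℝ} (ω0 s : ℝ) (hH : 0 < vH + v0) (hL : 0 < vL + v0)
    (hh : h ∈ Set.Icc 0 1) : pHigh ω0 v0 vH vL h s ∈ Set.Icc 0 1 := by
  have hhigh : 0 ≤ h * gauss s ω0 (vH + v0) := mul_nonneg hh.1 (gauss_pos s ω0 hH).le
  have hlow : 0 ≤ (1 - h) * gauss s ω0 (vL + v0) :=
    mul_nonneg (sub_nonneg.2 hh.2) (gauss_pos s ω0 hL).le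
  exact ⟨div_nonneg hhigh (add_nonneg hhigh hlow),
    div_le_one_of_le₀ (le_add_of_nonneg_right hlow) (add_nonneg hhigh hlow)⟩

theorem stmt_4_general {ω0 v0 vH vL h s r r' : ℝ} (hv0 : 0 < v0) (hvH : 0 < vH) (hvL : 0 < vL)
    (hh : h ∈ Set.Icc 0 1) (hs : ω0 < s) (hr : 0 < r) (hrr' : r < r') :
    aOpt ω0 v0 vH vL h r' s < aOpt ω0 v0 vH vL h r s := by
  have hp := pHigh_mem_Icc ω0 s (add_pos hvH hv0) (add_pos hvL hv0) hh
  have hH : 0 < aQ ω0 v0 vH r s - aQ ω0 v0 vH r' s := sub_pos.2 (aQ_lt_aQ hv0 hvH hs hr hrr')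
  have hL : 0 < aQ ω0 v0 vL r s - aQ ω0 v0 vL r' s := sub_pos.2 (aQ_lt_aQ hv0 hvL hs hr hrr')
  have hmix := convex_Ioi (0 : ℝ) hH hL hp.1 (sub_nonneg.2 hp.2) (add_sub_cancel _ _)
  simp only [smul_eq_mul, Set.mem_Ioi] at hmix
  unfold aOpt
  linarith

/-- Proposition 3 (`prop:dadr`): for a signal `s` with `ω0 < s < ω0 + r`, the optimal action
is strictly decreasing in the censoring radius. -/
theorem stmt_4 (ω0 v0 vH vL h : ℝ) (hv0 : 0 < v0) (hvH : 0 < vH) (hHL : vH < vL)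
    (hh0 : 0 < h) (hh1 : h < 1) :
    ∀ s r r' : ℝ, ω0 < s → s < ω0 + r → r < r' →
      aOpt ω0 v0 vH vL h r' s < aOpt ω0 v0 vH vL h r s := by
  intro s r r' hs hsr hrr'
  exact stmt_4_general hv0 hvH (hvH.trans hHL) ⟨hh0.le, hh1.le⟩ hs (by linarith) hrr'
end

section
/- Fix ω0 ∈ ℝ, σ0² > 0, σq² > 0, and a finite radius r > 0. Define D_{r,q}(ω) := ∫_{ω0−r}^{ω0+r} φ(t; ω, σq²) dt and the type-q censored posterior mean a_q*(s,r) := (∫ ω·φ(s; ω, σq²)·φ(ω; ω0, σ0²)/D_{r,q}(ω) dω) / (∫ φ(s; ω, σq²)·φ(ω; ω0, σ0²)/D_{r,q}(ω) dω). Then s ↦ a_q*(s,r) is strictly increasing: for all s < s′, a_q*(s,r) < a_q*(s′,r). -/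
open MeasureTheory Real Filter

/-!
Completing the square gives `gauss s ω v = c(s) * exp (-ω ^ 2 / (2 * v) + s / v * ω)`, so for any
prior the posteriors of `ω` form an exponential family with natural parameter `s / v`. The mean of
such a family is the derivative of the cumulant generating function, and the derivative of the mean
is the variance, which is positive unless the prior is concentrated at one point.

Censoring only replaces the Gaussian prior by its reweighting with `1 / D(ω)`. That weight can
grow faster than the prior decays, but every signal density is at most a multiple of
`D(ω) * exp (K * |s - ω|)`, and the Gaussian prior integrates exponentials of `|s - ω|`.
-/

open ProbabilityTheory

open scoped NNReal

section ExponentialFamily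

variable {Ω : Type*} {mΩ : MeasurableSpace Ω} {μ : Measure Ω} {X : Ω → ℝ}

lemma variance_tilted_mul_pos {t : ℝ} (hX : ∀ c, ¬ ∀ᵐ ω ∂μ, X ω = c)
    (ht : t ∈ interior (integrableExpSet X μ)) : 0 < Var[X; μ.tilted (t * X ·)] := by
  have ht_int : Integrable (fun ω ↦ exp (t * X ω)) μ :=
    interior_subset (s := integrableExpSet X μ) ht
  have : NeZero μ := ⟨by rintro rfl; simp at hX⟩
  have := isProbabilityMeasure_tilted ht_int
  refine (variance_nonneg _ _).lt_of_ne' fun hvar ↦ hX (∫ ω, X ω ∂μ.tilted (t * X ·)) ?_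
  exact (absolutelyContinuous_tilted ht_int).ae_le
    (ae_eq_integral_of_variance_eq_zero (memLp_tilted_mul ht 2) hvar)

lemma strictMonoOn_deriv_cgf (hX : ∀ c, ¬ ∀ᵐ ω ∂μ, X ω = c) :
    StrictMonoOn (deriv (cgf X μ)) (interior (integrableExpSet X μ)) := by
  refine strictMonoOn_of_deriv_pos convex_integrableExpSet.interior
    analyticOnNhd_cgf.deriv.continuousOn fun t ht ↦ ?_
  rw [interior_interior] at ht
  calc 0 < Var[X; μ.tilted (t * X ·)] := variance_tilted_mul_pos hX ht
    _ = iteratedDeriv 2 (cgf X μ) t := variance_tilted_mul ht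
    _ = deriv (deriv (cgf X μ)) t := by rw [iteratedDeriv_succ, iteratedDeriv_one]

lemma strictMonoOn_integral_tilted_mul (hX : ∀ c, ¬ ∀ᵐ ω ∂μ, X ω = c) :
    StrictMonoOn (fun t ↦ ∫ ω, X ω ∂μ.tilted (t * X ·)) (interior (integrableExpSet X μ)) :=
  (strictMonoOn_deriv_cgf hX).congr fun _ ht ↦ (integral_tilted_mul_self ht).symm

end ExponentialFamily

section GaussianLikelihood

lemma continuous_gauss_s8 (v : ℝ) : Continuous fun p : ℝ × ℝ ↦ gauss p.1 p.2 v := by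
  unfold gauss
  fun_prop

lemma gauss_eq_mul_exp (s ω v : ℝ) :
    gauss s ω v = (√(2 * π * v))⁻¹ * exp (-s ^ 2 / (2 * v)) *
      exp (-ω ^ 2 / (2 * v) + s / v * ω) := by
  rw [gauss, mul_assoc (√(2 * π * v))⁻¹, ← exp_add]
  congr 2
  ring

/-- The posterior mean of `ω` after observing the signal `s` with density `gauss s ω v`, when the
prior is `ν`. The prior need not be finite: only the products `gauss s ω v ∂ν` have to be
normalisable. -/
noncomputable def gaussPosteriorMean (ν : Measure ℝ) (v s : ℝ) : ℝ :=
  (∫ ω, ω * gauss s ω v ∂ν) / ∫ ω, gauss s ω v ∂ν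

variable {ν : Measure ℝ} {v : ℝ}

lemma integrable_exp_of_integrable_gauss (hv : 0 < v) {s : ℝ}
    (hν : Integrable (fun ω ↦ gauss s ω v) ν) :
    Integrable (fun ω ↦ exp (-ω ^ 2 / (2 * v) + s / v * ω)) ν := by
  have hc : (√(2 * π * v))⁻¹ * exp (-s ^ 2 / (2 * v)) ≠ 0 := by positivity
  simp only [gauss_eq_mul_exp] at hν
  exact (integrable_const_mul_iff hc.isUnit _).1 hν

lemma gaussPosteriorMean_eq_integral_tilted (hv : 0 < v) (s : ℝ) :
    gaussPosteriorMean ν v s =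
      ∫ ω, ω ∂ν.tilted (fun ω ↦ -ω ^ 2 / (2 * v) + s / v * ω) := by
  have hc : (√(2 * π * v))⁻¹ * exp (-s ^ 2 / (2 * v)) ≠ 0 := by positivity
  simp only [gaussPosteriorMean, gauss_eq_mul_exp, mul_left_comm _ (_ * exp (-s ^ 2 / (2 * v))),
    integral_const_mul, mul_div_mul_left _ _ hc, integral_tilted, smul_eq_mul,
    div_mul_eq_mul_div, integral_div, mul_comm (exp _)]

theorem strictMono_gaussPosteriorMean (hv : 0 < v) (hν : ∀ c, ¬ ∀ᵐ ω ∂ν, ω = c)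
    (hint : ∀ s, Integrable (fun ω ↦ gauss s ω v) ν) : StrictMono (gaussPosteriorMean ν v) := by
  have hbase : Integrable (fun ω ↦ exp (-ω ^ 2 / (2 * v))) ν := by
    simpa using integrable_exp_of_integrable_gauss hv (hint 0)
  set μ := ν.tilted fun ω ↦ -ω ^ 2 / (2 * v) with hμ
  have hmean (s : ℝ) : gaussPosteriorMean ν v s = ∫ ω, ω ∂μ.tilted (s / v * ·) := by
    rw [gaussPosteriorMean_eq_integral_tilted hv, hμ, tilted_tilted hbase]
    rfl
  have hμ_const : ∀ c, ¬ ∀ᵐ ω ∂μ, ω = c := fun c hc ↦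
    hν c ((absolutelyContinuous_tilted hbase).ae_le hc)
  have hexp : integrableExpSet (fun ω ↦ ω) μ = Set.univ := by
    refine Set.eq_univ_of_forall fun t ↦ (integrable_tilted_iff hbase _).2 ?_
    simpa only [smul_eq_mul, ← exp_add, mul_div_cancel_left₀ t hv.ne'] using
      integrable_exp_of_integrable_gauss hv (hint (v * t))
  intro s s' hs
  rw [hmean, hmean]
  exact strictMonoOn_integral_tilted_mul hμ_const (by simp [hexp]) (by simp [hexp])
    (div_lt_div_of_pos_right hs hv)

end GaussianLikelihood

section WindowProbability

lemma gauss_mul_exp_le_gauss {v L s t : ℝ} (hv : 0 < v) (hst : |t - s| ≤ L) (ω : ℝ) :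
    gauss s ω v * exp (-(L ^ 2 + 2 * L * |s - ω|) / (2 * v)) ≤ gauss t ω v := by
  have hdist : |t - ω| ≤ |s - ω| + L := by linarith [abs_sub_le t s ω]
  have hsq : (t - ω) ^ 2 ≤ (s - ω) ^ 2 + (L ^ 2 + 2 * L * |s - ω|) :=
    calc (t - ω) ^ 2 = |t - ω| ^ 2 := (sq_abs _).symm
      _ ≤ (|s - ω| + L) ^ 2 := by gcongr
      _ = (s - ω) ^ 2 + (L ^ 2 + 2 * L * |s - ω|) := by rw [← sq_abs (s - ω)]; ring
  unfold gauss
  rw [mul_assoc, ← exp_add, ← add_div]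
  gcongr
  linarith

lemma winProbQ_nonneg (ω0 vq r ω : ℝ) : 0 ≤ winProbQ ω0 vq r ω :=
  integral_nonneg fun t ↦ by unfold gauss; positivity

lemma measurable_winProbQ (ω0 vq r : ℝ) : Measurable (winProbQ ω0 vq r) :=
  ((continuous_gauss_s8 vq).stronglyMeasurable.integral_prod_left'
    (μ := volume.restrict (Set.Icc (ω0 - r) (ω0 + r)))).measurable

variable {ω0 vq r : ℝ}

lemma gauss_mul_exp_le_winProbQ (hvq : 0 < vq) (hr : 0 < r) (s ω : ℝ) :
    gauss s ω vq * exp (-((|s - ω0| + r) ^ 2 + 2 * (|s - ω0| + r) * |s - ω|) / (2 * vq)) *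
      (2 * r) ≤ winProbQ ω0 vq r ω := by
  have hcont : Continuous fun t ↦ gauss t ω vq :=
    (continuous_gauss_s8 vq).comp (continuous_id.prodMk continuous_const)
  have hvol : volume.real (Set.Icc (ω0 - r) (ω0 + r)) = 2 * r := by
    rw [Real.volume_real_Icc_of_le (by linarith)]
    ring
  rw [← hvol]
  refine setIntegral_ge_of_const_le_real measurableSet_Icc measure_Icc_lt_top.ne
    (fun t ht ↦ gauss_mul_exp_le_gauss hvq ?_ ω) hcont.integrableOn_Icc
  have ht_center : |t - ω0| ≤ r := abs_le.2 ⟨by linarith [ht.1], by linarith [ht.2]⟩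
  linarith [abs_sub_le t ω0 s, abs_sub_comm s ω0]

lemma winProbQ_pos (hvq : 0 < vq) (hr : 0 < r) (ω : ℝ) : 0 < winProbQ ω0 vq r ω := by
  refine lt_of_lt_of_le ?_ (gauss_mul_exp_le_winProbQ hvq hr ω0 ω)
  have := gauss_pos ω0 ω hvq
  positivity

lemma gauss_div_winProbQ_le (hvq : 0 < vq) (hr : 0 < r) (s ω : ℝ) :
    gauss s ω vq / winProbQ ω0 vq r ω ≤
      exp ((|s - ω0| + r) ^ 2 / (2 * vq)) / (2 * r) * exp ((|s - ω0| + r) / vq * |s - ω|) := by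
  rw [div_le_iff₀ (winProbQ_pos hvq hr ω)]
  set L := |s - ω0| + r
  calc gauss s ω vq
      = exp (L ^ 2 / (2 * vq)) / (2 * r) * exp (L / vq * |s - ω|) *
          (gauss s ω vq * exp (-(L ^ 2 + 2 * L * |s - ω|) / (2 * vq)) * (2 * r)) := by
        have hexp : exp (-(L ^ 2 + 2 * L * |s - ω|) / (2 * vq)) =
            (exp (L ^ 2 / (2 * vq)) * exp (L / vq * |s - ω|))⁻¹ := by
          rw [← exp_add, ← exp_neg]
          congr 1
          ring
        rw [hexp]
        field_simp
    _ ≤ _ := by gcongr; exact gauss_mul_exp_le_winProbQ hvq hr s ω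

end WindowProbability

section CensoredPrior

lemma integrable_exp_mul_abs_sub_gaussianReal (m : ℝ) (v : ℝ≥0) (K s : ℝ) :
    Integrable (fun ω ↦ exp (K * |s - ω|)) (gaussianReal m v) := by
  have hlin (t : ℝ) : Integrable (fun ω ↦ exp (t * (s - ω))) (gaussianReal m v) := by
    simpa only [← exp_add, mul_sub, neg_mul, ← sub_eq_add_neg] using
      (integrable_exp_mul_gaussianReal (-t)).const_mul (exp (t * s))
  exact integrable_exp_mul_abs (hlin K) (hlin (-K))

/-- The Gaussian prior reweighted by the inverse window probability `1 / D(ω)`. With respect to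
this measure, which may be infinite, the likelihood `gauss s ω vq` of an uncensored signal is the
unnormalised posterior density after a censored one. -/
noncomputable def censoredPrior (ω0 : ℝ) (v0 : ℝ≥0) (vq r : ℝ) : Measure ℝ :=
  (gaussianReal ω0 v0).withDensity fun ω ↦ ENNReal.ofReal (winProbQ ω0 vq r ω)⁻¹

variable {ω0 vq r : ℝ} {v0 : ℝ≥0}

lemma measurable_ofReal_inv_winProbQ (ω0 vq r : ℝ) :
    Measurable fun ω ↦ ENNReal.ofReal (winProbQ ω0 vq r ω)⁻¹ :=
  (measurable_winProbQ ω0 vq r).inv.ennreal_ofReal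

lemma integral_censoredPrior (hv0 : v0 ≠ 0) (f : ℝ → ℝ) :
    ∫ ω, f ω ∂censoredPrior ω0 v0 vq r = ∫ ω, f ω * gauss ω ω0 v0 / winProbQ ω0 vq r ω := by
  rw [censoredPrior, integral_withDensity_eq_integral_toReal_smul
    (measurable_ofReal_inv_winProbQ ω0 vq r) (ae_of_all _ fun _ ↦ ENNReal.ofReal_lt_top),
    integral_gaussianReal_eq_integral_smul hv0]
  refine integral_congr_ae (ae_of_all _ fun ω ↦ ?_)
  have hpdf : gaussianPDFReal ω0 v0 ω = gauss ω ω0 v0 := rfl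
  simp only [ENNReal.toReal_ofReal (inv_nonneg.2 (winProbQ_nonneg ω0 vq r ω)), smul_eq_mul, hpdf]
  ring

lemma aQ_eq_gaussPosteriorMean_censoredPrior (hv0 : v0 ≠ 0) (s : ℝ) :
    aQ ω0 v0 vq r s = gaussPosteriorMean (censoredPrior ω0 v0 vq r) vq s := by
  simp only [aQ, gaussPosteriorMean, integral_censoredPrior hv0, mul_assoc, mul_div_assoc]

lemma integrable_gauss_censoredPrior (hvq : 0 < vq) (hr : 0 < r) (s : ℝ) :
    Integrable (fun ω ↦ gauss s ω vq) (censoredPrior ω0 v0 vq r) := by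
  rw [censoredPrior, integrable_withDensity_iff (measurable_ofReal_inv_winProbQ ω0 vq r)
    (ae_of_all _ fun _ ↦ ENNReal.ofReal_lt_top)]
  simp only [ENNReal.toReal_ofReal (inv_nonneg.2 (winProbQ_nonneg ω0 vq r _)), ← div_eq_mul_inv]
  have hmeas : Measurable fun ω ↦ gauss s ω vq / winProbQ ω0 vq r ω :=
    ((continuous_gauss_s8 vq).comp (continuous_const.prodMk continuous_id)).measurable.div
      (measurable_winProbQ ω0 vq r)
  have hbound (ω : ℝ) := (norm_of_nonneg (div_pos (gauss_pos s ω hvq)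
    (winProbQ_pos hvq hr ω)).le).trans_le (gauss_div_winProbQ_le (ω0 := ω0) hvq hr s ω)
  exact ((integrable_exp_mul_abs_sub_gaussianReal ω0 v0 _ s).const_mul _).mono'
    hmeas.aestronglyMeasurable (ae_of_all _ hbound)

lemma not_ae_eq_const_censoredPrior (hv0 : v0 ≠ 0) (hvq : 0 < vq) (hr : 0 < r) (c : ℝ) :
    ¬ ∀ᵐ ω ∂censoredPrior ω0 v0 vq r, ω = c := by
  intro hc
  have hac : gaussianReal ω0 v0 ≪ censoredPrior ω0 v0 vq r :=
    withDensity_absolutelyContinuous' (measurable_ofReal_inv_winProbQ ω0 vq r).aemeasurable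
      (ae_of_all _ fun ω ↦ (ENNReal.ofReal_pos.2 (inv_pos.2 (winProbQ_pos hvq hr ω))).ne')
  have := nullSingletonClass_gaussianReal (μ := ω0) hv0
  obtain ⟨ω, hω, hω'⟩ := (Eventually.and (hac.ae_le hc) ((gaussianReal ω0 v0).ae_ne c)).exists
  exact hω' hω

end CensoredPrior

/-- Lemma 3 (`lem:sincreasing`): for a known source quality and a finite censoring radius,
the optimal action is strictly increasing in the signal. -/
theorem stmt_8 (ω0 v0 vq r : ℝ) (hv0 : 0 < v0) (hvq : 0 < vq) (hr : 0 < r) :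
    ∀ s s' : ℝ, s < s' → aQ ω0 v0 vq r s < aQ ω0 v0 vq r s' := by
  intro s s' hs
  lift v0 to NNReal using hv0.le
  have hv0' : v0 ≠ 0 := (NNReal.coe_pos.1 hv0).ne'
  simp only [aQ_eq_gaussPosteriorMean_censoredPrior hv0']
  exact strictMono_gaussPosteriorMean hvq (not_ae_eq_const_censoredPrior hv0' hvq hr)
    (integrable_gauss_censoredPrior hvq hr) hs
end

section
/- Let m, c ∈ ℝ with c < m, let v > 0, and let g : [0,∞) → (0,∞) be strictly increasing. Define the weight w(ω) := g(|ω − c|) and assume ∫ w(ω)·φ(ω; m, v) dω < ∞ and ∫ |ω|·w(ω)·φ(ω; m, v) dω < ∞. Then the reweighted mean strictly exceeds m: (∫ ω·w(ω)·φ(ω; m, v) dω) / (∫ w(ω)·φ(ω; m, v) dω) > m. Symmetrically, if c > m, the reweighted mean is strictly less than m. -/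
open MeasureTheory Real Filter

/-!
Pair each point `x` with its reflection `2 * m - x` in `m`. A measure symmetric about `m` treats
both alike, but the one on the far side of `m` from `c` is further from `c` and so gets the larger
weight; each pair therefore pulls the mean away from `c`.
-/

section Reflection

variable {m c x : ℝ}

lemma abs_reflection_sub_lt_abs_sub_iff :
    |2 * m - x - c| < |x - c| ↔ 0 < (m - c) * (x - m) := by
  rw [← sq_lt_sq, ← sub_pos,
    show (x - c) ^ 2 - (2 * m - x - c) ^ 2 = 4 * ((m - c) * (x - m)) by ring,
    mul_pos_iff_of_pos_left four_pos]

lemma abs_sub_lt_abs_reflection_sub_iff :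
    |x - c| < |2 * m - x - c| ↔ (m - c) * (x - m) < 0 := by
  have h := abs_reflection_sub_lt_abs_sub_iff (m := m) (c := c) (x := 2 * m - x)
  rwa [sub_sub_cancel, show (m - c) * (2 * m - x - m) = -((m - c) * (x - m)) by ring,
    neg_pos] at h

lemma mul_sub_comp_abs_reflection_pos {g : ℝ → ℝ} (hg : StrictMonoOn g (Set.Ici 0))
    (hmc : m ≠ c) (hx : x ≠ m) :
    0 < (m - c) * (x - m) * (g |x - c| - g |2 * m - x - c|) := by
  rcases (mul_ne_zero (sub_ne_zero.2 hmc) (sub_ne_zero.2 hx)).lt_or_gt with hneg | hpos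
  · have hlt := hg (Set.mem_Ici.2 (abs_nonneg _)) (Set.mem_Ici.2 (abs_nonneg _))
      (abs_sub_lt_abs_reflection_sub_iff.2 hneg)
    exact mul_pos_of_neg_of_neg hneg (sub_neg.2 hlt)
  · have hlt := hg (Set.mem_Ici.2 (abs_nonneg _)) (Set.mem_Ici.2 (abs_nonneg _))
      (abs_reflection_sub_lt_abs_sub_iff.2 hpos)
    exact mul_pos hpos (sub_pos.2 hlt)

end Reflection

section IntegralPos

variable {α : Type*} [MeasurableSpace α] {μ : Measure α} {f : α → ℝ}

lemma integral_pos_of_add_comp_measurePreserving {T : α → α} (hT : MeasurePreserving T μ μ)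
    (hf : Integrable f μ) (hnonneg : 0 ≤ᵐ[μ] f + f ∘ T)
    (hsupp : 0 < μ (Function.support (f + f ∘ T))) :
    0 < ∫ x, f x ∂μ := by
  have hfT : Integrable (f ∘ T) μ := (hT.integrable_comp hf.aestronglyMeasurable).2 hf
  have integral_comp : ∫ x, (f ∘ T) x ∂μ = ∫ x, f x ∂μ := by
    have h := integral_map hT.measurable.aemeasurable (hT.map_eq.symm ▸ hf.aestronglyMeasurable)
    rw [hT.map_eq] at h
    exact h.symm
  have hsum : 0 < ∫ x, (f + f ∘ T) x ∂μ :=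
    (integral_pos_iff_support_of_nonneg_ae hnonneg (hf.add hfT)).2 hsupp
  rw [integral_add' hf hfT, integral_comp] at hsum
  linarith

lemma integral_pos_of_forall_pos (hμ : μ ≠ 0) (hf : Integrable f μ) (hpos : ∀ x, 0 < f x) :
    0 < ∫ x, f x ∂μ := by
  rw [integral_pos_iff_support_of_nonneg (fun x => (hpos x).le) hf,
    Function.support_eq_univ fun x => (hpos x).ne']
  exact Measure.measure_univ_pos.2 hμ

end IntegralPos

section SymmetricMeasure

variable {μ : Measure ℝ} {m c : ℝ}

lemma integrable_id_mul_of_abs_mul {w : ℝ → ℝ} (hw : Integrable w μ)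
    (hw_abs : Integrable (fun ω => |ω| * w ω) μ) : Integrable (fun ω => ω * w ω) μ :=
  hw_abs.mono (aestronglyMeasurable_id.mul hw.aestronglyMeasurable) (by simp)

lemma mul_integral_sub_mul_comp_abs_pos {g : ℝ → ℝ}
    (hμ : MeasurePreserving (fun x => 2 * m - x) μ μ) (hμm : μ {m}ᶜ ≠ 0)
    (hg : StrictMonoOn g (Set.Ici 0)) (hmc : m ≠ c)
    (hInt : Integrable (fun ω => (ω - m) * g |ω - c|) μ) :
    0 < (m - c) * ∫ ω, (ω - m) * g |ω - c| ∂μ := by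
  set f : ℝ → ℝ := fun ω => (m - c) * ((ω - m) * g |ω - c|)
  have add_reflection (x : ℝ) : (f + f ∘ fun x => 2 * m - x) x =
      (m - c) * (x - m) * (g |x - c| - g |2 * m - x - c|) := by
    simp only [f, Pi.add_apply, Function.comp_apply]
    ring
  have add_reflection_pos (x : ℝ) (hx : x ≠ m) : 0 < (f + f ∘ fun x => 2 * m - x) x :=
    add_reflection x ▸ mul_sub_comp_abs_reflection_pos hg hmc hx
  have add_reflection_nonneg : 0 ≤ f + f ∘ fun x => 2 * m - x := fun x => by
    rcases eq_or_ne x m with rfl | hx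
    · simp [add_reflection]
    · exact (add_reflection_pos x hx).le
  rw [← integral_const_mul]
  exact integral_pos_of_add_comp_measurePreserving hμ (hInt.const_mul _)
    (.of_forall add_reflection_nonneg)
    ((pos_iff_ne_zero.2 hμm).trans_le (measure_mono fun x hx => (add_reflection_pos x hx).ne'))

theorem stmt_15_general {g : ℝ → ℝ} (hμ : MeasurePreserving (fun x => 2 * m - x) μ μ)
    (hμm : μ {m}ᶜ ≠ 0) (hg_pos : ∀ x, 0 ≤ x → 0 < g x) (hg_mono : StrictMonoOn g (Set.Ici 0))
    (hInt : Integrable (fun ω => g |ω - c|) μ)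
    (hIntAbs : Integrable (fun ω => |ω| * g |ω - c|) μ) :
    (c < m → m < (∫ ω, ω * g |ω - c| ∂μ) / ∫ ω, g |ω - c| ∂μ) ∧
    (m < c → (∫ ω, ω * g |ω - c| ∂μ) / ∫ ω, g |ω - c| ∂μ < m) := by
  have hμ_ne : μ ≠ 0 := fun h => hμm (by simp [h])
  have mass_pos : 0 < ∫ ω, g |ω - c| ∂μ :=
    integral_pos_of_forall_pos hμ_ne hInt fun ω => hg_pos _ (abs_nonneg _)
  have hIntId := integrable_id_mul_of_abs_mul hInt hIntAbs
  have integral_centered : ∫ ω, (ω - m) * g |ω - c| ∂μ =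
      (∫ ω, ω * g |ω - c| ∂μ) - m * ∫ ω, g |ω - c| ∂μ := by
    simp only [sub_mul]
    rw [integral_sub hIntId (hInt.const_mul m), integral_const_mul]
  have shift_pos (hmc : m ≠ c) :
      0 < (m - c) * ((∫ ω, ω * g |ω - c| ∂μ) - m * ∫ ω, g |ω - c| ∂μ) := by
    rw [← integral_centered]
    refine mul_integral_sub_mul_comp_abs_pos hμ hμm hg_mono hmc ?_
    simpa only [sub_mul] using! hIntId.sub (hInt.const_mul m)
  constructor
  · intro hcm
    rw [lt_div_iff₀ mass_pos, ← sub_pos]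
    exact pos_of_mul_pos_right (shift_pos hcm.ne') (sub_pos.2 hcm).le
  · intro hmc
    rw [div_lt_iff₀ mass_pos, ← sub_neg]
    exact neg_of_mul_pos_right (shift_pos hmc.ne) (sub_neg.2 hmc).le

end SymmetricMeasure

section Gaussian

open ProbabilityTheory

variable {m v : ℝ}

lemma measurePreserving_reflection_gaussianReal (m : ℝ) (v : NNReal) :
    MeasurePreserving (fun x => 2 * m - x) (gaussianReal m v) (gaussianReal m v) where
  measurable := by fun_prop
  map_eq := by rw [gaussianReal_map_const_sub, two_mul, add_sub_cancel_right]

lemma gaussianReal_compl_singleton_ne_zero (m x : ℝ) {v : NNReal} (hv : v ≠ 0) :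
    gaussianReal m v {x}ᶜ ≠ 0 := by
  have := nullSingletonClass_gaussianReal (μ := m) hv
  simp [prob_compl_eq_zero_iff (measurableSet_singleton x)]

lemma gaussianPDFReal_toNNReal (hv : 0 ≤ v) (x : ℝ) :
    gaussianPDFReal m v.toNNReal x = gauss x m v := by
  rw [gaussianPDFReal, gauss, coe_toNNReal v hv]

lemma integrable_gaussianReal_iff_integrable_mul_gauss (hv : 0 < v) {f : ℝ → ℝ} :
    Integrable f (gaussianReal m v.toNNReal) ↔ Integrable fun x => f x * gauss x m v := by
  rw [gaussianReal_of_var_ne_zero m (toNNReal_pos.2 hv).ne',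
    integrable_withDensity_iff (measurable_gaussianPDF m _)
      (.of_forall fun _ => gaussianPDF_lt_top)]
  simp only [toReal_gaussianPDF, gaussianPDFReal_toNNReal hv.le]

lemma integral_gaussianReal_eq_integral_mul_gauss (hv : 0 < v) (f : ℝ → ℝ) :
    ∫ x, f x ∂gaussianReal m v.toNNReal = ∫ x, f x * gauss x m v := by
  rw [integral_gaussianReal_eq_integral_smul (toNNReal_pos.2 hv).ne']
  simp only [gaussianPDFReal_toNNReal hv.le, smul_eq_mul, mul_comm]

end Gaussian

/-- Reweighting a Gaussian density by a weight that strictly increases in the distance to a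
point `c` moves the mean away from `c`: if `c < m` the reweighted mean strictly exceeds `m`,
and symmetrically if `c > m` it is strictly less than `m`. -/
theorem stmt_15 (m c v : ℝ) (hv : 0 < v) (g : ℝ → ℝ)
    (hg_pos : ∀ x : ℝ, 0 ≤ x → 0 < g x)
    (hg_mono : StrictMonoOn g (Set.Ici (0 : ℝ)))
    (hInt : Integrable fun ω : ℝ => g |ω - c| * gauss ω m v)
    (hIntAbs : Integrable fun ω : ℝ => |ω| * (g |ω - c| * gauss ω m v)) :
    (c < m →
      m < (∫ ω : ℝ, ω * (g |ω - c| * gauss ω m v)) /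
            (∫ ω : ℝ, g |ω - c| * gauss ω m v)) ∧
    (m < c →
      (∫ ω : ℝ, ω * (g |ω - c| * gauss ω m v)) /
          (∫ ω : ℝ, g |ω - c| * gauss ω m v) < m) := by
  simpa only [integral_gaussianReal_eq_integral_mul_gauss hv, mul_assoc] using
    stmt_15_general (c := c) (measurePreserving_reflection_gaussianReal m v.toNNReal)
      (gaussianReal_compl_singleton_ne_zero m m (toNNReal_pos.2 hv).ne') hg_pos hg_mono
      ((integrable_gaussianReal_iff_integrable_mul_gauss hv).2 hInt)
      ((integrable_gaussianReal_iff_integrable_mul_gauss hv).2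
        (by simpa only [mul_assoc] using hIntAbs))
end

section
/- Let ω0 ∈ ℝ, let the prior density have the form μ0(ω) = k(|ω − ω0|) for a nonincreasing function k : [0,∞) → [0,∞) such that μ0 is a probability density with ∫ |ω|·μ0(ω) dω < ∞, and let the signal density have the form f(s|ω) = j(|s − ω|) for a strictly decreasing function j : [0,∞) → (0,∞), with ∫ |ω|·j(|s − ω|)·μ0(ω) dω < ∞ for the fixed signal s under consideration. Then the posterior mean E(s) := (∫ ω·j(|s − ω|)·μ0(ω) dω) / (∫ j(|s − ω|)·μ0(ω) dω) satisfies: E(s) > ω0 if and only if s > ω0 (and E(s) = ω0 if s = ω0). That is, a Bayesian with a symmetric quasiconcave prior and a symmetric quasiconcave signal distribution updates in the direction of the signal. -/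
open MeasureTheory Real Filter

/-!
Reflection through the center `c` preserves the prior, so the centered first moment
`∫ w ω • (ω - c)` of the posterior weight `w` equals its average with the reflected integral,
`∫ ((w ω - w (reflection of ω)) / 2) • (ω - c)`. A state and its reflection carry the same prior
weight, and the one nearer to the signal `s` has the larger likelihood; the nearer one is the one
with `0 < ⟪s - c, ω - c⟫`. So every value of the averaged integrand has nonnegative inner product
with `s - c`.
-/

open Equiv (pointReflection)

theorem pointReflection_eq_add_sub {E : Type*} [AddCommGroup E] (c ω : E) :
    pointReflection c ω = c + c - ω := by
  rw [Equiv.pointReflection_apply, vsub_eq_sub, vadd_eq_add]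
  abel

theorem smul_sub_add_smul_pointReflection_sub {E : Type*} [AddCommGroup E] [Module ℝ E]
    (w : E → ℝ) (c ω : E) :
    w ω • (ω - c) + w (pointReflection c ω) • (pointReflection c ω - c) =
      (w ω - w (pointReflection c ω)) • (ω - c) := by
  rw [pointReflection_eq_add_sub]
  module

theorem measurePreserving_pointReflection {E : Type*} [AddCommGroup E] [MeasurableSpace E]
    [MeasurableAdd E] [MeasurableNeg E] {ν : Measure E} [ν.IsAddLeftInvariant] [ν.IsNegInvariant]
    (c : E) : MeasurePreserving (pointReflection c) ν ν := by
  simpa only [← pointReflection_eq_add_sub] using Measure.measurePreserving_sub_left ν (c + c)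

section WeightedMean

variable {E : Type*} [NormedAddCommGroup E] [NormedSpace ℝ E] [MeasurableSpace E]

/-- The mean of the measure with density proportional to `w` with respect to `ν`; with `w` the
likelihood of the observed signal times the prior density, this is the posterior mean. The weight
need not be normalized, and the value is `0` if its total mass is `0`. -/
noncomputable def weightedMean (ν : Measure E) (w : E → ℝ) : E :=
  (∫ ω, w ω ∂ν)⁻¹ • ∫ ω, w ω • ω ∂ν

theorem weightedMean_real (ν : Measure ℝ) (w : ℝ → ℝ) :
    weightedMean ν w = (∫ ω, ω * w ω ∂ν) / ∫ ω, w ω ∂ν := by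
  simp only [weightedMean, smul_eq_mul, mul_comm, div_eq_mul_inv]

variable {ν : Measure E} {w : E → ℝ} {c : E}

theorem integrable_smul_sub_const (hw : Integrable w ν) (hwm : Integrable (fun ω ↦ w ω • ω) ν) :
    Integrable (fun ω ↦ w ω • (ω - c)) ν := by
  simp only [smul_sub]
  exact hwm.sub (hw.smul_const c)

theorem weightedMean_sub_const [CompleteSpace E] (hw : Integrable w ν)
    (hwm : Integrable (fun ω ↦ w ω • ω) ν) (hmass : ∫ ω, w ω ∂ν ≠ 0) :
    weightedMean ν w - c = (∫ ω, w ω ∂ν)⁻¹ • ∫ ω, w ω • (ω - c) ∂ν := by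
  simp only [smul_sub]
  rw [integral_sub hwm (hw.smul_const c), integral_smul_const, smul_sub, inv_smul_smul₀ hmass,
    weightedMean]

theorem integrable_sub_comp_pointReflection_smul (hν : MeasurePreserving (pointReflection c) ν ν)
    (hw : Integrable w ν) (hwm : Integrable (fun ω ↦ w ω • ω) ν) :
    Integrable (fun ω ↦ (w ω - w (pointReflection c ω)) • (ω - c)) ν := by
  have hint : Integrable (fun ω ↦ w ω • (ω - c)) ν := integrable_smul_sub_const hw hwm
  simp only [← smul_sub_add_smul_pointReflection_sub]
  exact hint.add (hν.integrable_comp_of_integrable hint)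

variable [BorelSpace E]

theorem two_smul_integral_smul_sub_center (hν : MeasurePreserving (pointReflection c) ν ν)
    (hw : Integrable w ν) (hwm : Integrable (fun ω ↦ w ω • ω) ν) :
    (2 : ℝ) • ∫ ω, w ω • (ω - c) ∂ν =
      ∫ ω, (w ω - w (pointReflection c ω)) • (ω - c) ∂ν := by
  have hint : Integrable (fun ω ↦ w ω • (ω - c)) ν := integrable_smul_sub_const hw hwm
  have hemb : MeasurableEmbedding (pointReflection c) :=
    (Homeomorph.pointReflection c).measurableEmbedding
  simp only [← smul_sub_add_smul_pointReflection_sub]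
  rw [two_smul]
  nth_rewrite 2 [← hν.integral_comp hemb]
  exact (integral_add hint (hν.integrable_comp_of_integrable hint)).symm

variable [CompleteSpace E]

theorem weightedMean_eq_of_comp_pointReflection (hν : MeasurePreserving (pointReflection c) ν ν)
    (hw : Integrable w ν) (hwm : Integrable (fun ω ↦ w ω • ω) ν) (hmass : ∫ ω, w ω ∂ν ≠ 0)
    (hsymm : ∀ ω, w (pointReflection c ω) = w ω) :
    weightedMean ν w = c := by
  have hmoment : ∫ ω, w ω • (ω - c) ∂ν = 0 := by
    simpa [hsymm] using two_smul_integral_smul_sub_center hν hw hwm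
  rw [← sub_eq_zero, weightedMean_sub_const hw hwm hmass, hmoment, smul_zero]

theorem map_weightedMean_sub_pos (φ : E →L[ℝ] ℝ)
    (hν : MeasurePreserving (pointReflection c) ν ν)
    (hw : Integrable w ν) (hwm : Integrable (fun ω ↦ w ω • ω) ν) (hmass : 0 < ∫ ω, w ω ∂ν)
    (htilt : ∀ ω, 0 ≤ (w ω - w (pointReflection c ω)) * φ (ω - c))
    (hstrict : 0 < ν (Function.support fun ω ↦ (w ω - w (pointReflection c ω)) * φ (ω - c))) :
    0 < φ (weightedMean ν w - c) := by
  have hint := integrable_sub_comp_pointReflection_smul hν hw hwm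
  have hmap (ω : E) : φ ((w ω - w (pointReflection c ω)) • (ω - c)) =
      (w ω - w (pointReflection c ω)) * φ (ω - c) := by
    rw [map_smul, smul_eq_mul]
  have htwice : 0 < 2 * φ (∫ ω, w ω • (ω - c) ∂ν) := by
    rw [← smul_eq_mul, ← map_smul, two_smul_integral_smul_sub_center hν hw hwm,
      ← φ.integral_comp_comm hint]
    simp only [hmap]
    refine (integral_pos_iff_support_of_nonneg htilt ?_).2 hstrict
    simpa only [hmap] using φ.integrable_comp hint
  rw [weightedMean_sub_const hw hwm hmass.ne', map_smul, smul_eq_mul]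
  exact mul_pos (inv_pos.2 hmass) (pos_of_mul_pos_right htwice zero_le_two)

end WeightedMean

theorem integral_mul_pos_of_integral_pos {α : Type*} [MeasurableSpace α] {ν : Measure α}
    {g p : α → ℝ} (hg : ∀ x, 0 < g x) (hp_nonneg : ∀ x, 0 ≤ p x) (hp : 0 < ∫ x, p x ∂ν)
    (hgp : Integrable (fun x ↦ g x * p x) ν) :
    0 < ∫ x, g x * p x ∂ν := by
  have hsupport : (Function.support fun x ↦ g x * p x) = Function.support p := by
    ext x
    simp [(hg x).ne']
  rw [integral_pos_iff_support_of_nonneg (fun x ↦ mul_nonneg (hg x).le (hp_nonneg x)) hgp, hsupport]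
  exact (integral_pos_iff_support_of_nonneg hp_nonneg (.of_integral_ne_zero hp.ne')).1 hp

section RadialLikelihood

open scoped RealInnerProductSpace

section Inner

variable {E : Type*} [NormedAddCommGroup E] [InnerProductSpace ℝ E]

theorem norm_sub_lt_norm_sub_pointReflection_iff {c s ω : E} :
    ‖s - ω‖ < ‖s - pointReflection c ω‖ ↔ 0 < ⟪s - c, ω - c⟫ := by
  have hdirect : s - ω = (s - c) - (ω - c) := by abel
  have hreflected : s - pointReflection c ω = (s - c) + (ω - c) := by
    rw [pointReflection_eq_add_sub]
    abel
  rw [← sq_lt_sq₀ (norm_nonneg _) (norm_nonneg _), hdirect, hreflected, norm_sub_sq_real,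
    norm_add_sq_real]
  constructor <;> intro h <;> linarith

theorem sub_mul_inner_pos_of_strictAntiOn {j : ℝ → ℝ} (hj : StrictAntiOn j (Set.Ici 0))
    {c s ω : E} (hne : ⟪s - c, ω - c⟫ ≠ 0) :
    0 < (j ‖s - ω‖ - j ‖s - pointReflection c ω‖) * ⟪s - c, ω - c⟫ := by
  rcases hne.lt_or_gt with hneg | hpos
  · have hfarther : ‖s - pointReflection c ω‖ < ‖s - ω‖ := by
      have hinner : 0 < ⟪s - c, pointReflection c ω - c⟫ := by
        rw [pointReflection_eq_add_sub, add_sub_right_comm, add_sub_cancel_right, ← neg_sub ω c,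
          inner_neg_right]
        exact neg_pos.2 hneg
      simpa only [Equiv.pointReflection_involutive c ω] using
        norm_sub_lt_norm_sub_pointReflection_iff.2 hinner
    exact mul_pos_of_neg_of_neg (sub_neg.2 (hj (norm_nonneg _) (norm_nonneg _) hfarther)) hneg
  · have hnearer := norm_sub_lt_norm_sub_pointReflection_iff.2 hpos
    exact mul_pos (sub_pos.2 (hj (norm_nonneg _) (norm_nonneg _) hnearer)) hpos

end Inner

theorem measurable_comp_norm_of_antitoneOn {E : Type*} [NormedAddCommGroup E] [MeasurableSpace E]
    [OpensMeasurableSpace E] {j : ℝ → ℝ} (hj : AntitoneOn j (Set.Ici 0)) :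
    Measurable fun x : E ↦ j ‖x‖ := by
  have hextend : Antitone fun r : ℝ ↦ j (max 0 r) := fun _ _ h ↦
    hj (Set.mem_Ici.2 (le_max_left _ _)) (Set.mem_Ici.2 (le_max_left _ _)) (max_le_max_left 0 h)
  simpa only [Function.comp_def, max_eq_right (norm_nonneg _)] using
    hextend.measurable.comp (measurable_norm (α := E))

theorem integrable_comp_norm_sub_mul {E : Type*} [NormedAddCommGroup E] [MeasurableSpace E]
    [BorelSpace E] {ν : Measure E} {j : ℝ → ℝ} {p : E → ℝ} (hj_nonneg : ∀ x, 0 ≤ x → 0 ≤ j x)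
    (hj : AntitoneOn j (Set.Ici 0)) (hp : Integrable p ν) (s : E) :
    Integrable (fun ω ↦ j ‖s - ω‖ * p ω) ν := by
  have hmeas : Measurable fun ω ↦ j ‖s - ω‖ :=
    (measurable_comp_norm_of_antitoneOn hj).comp (continuous_sub_left s).measurable
  refine hp.bdd_mul (c := j 0) hmeas.aestronglyMeasurable (.of_forall fun ω ↦ ?_)
  rw [Real.norm_of_nonneg (hj_nonneg _ (norm_nonneg _))]
  exact hj Set.self_mem_Ici (norm_nonneg (s - ω)) (norm_nonneg _)

theorem weightedMean_comp_norm_sub_mul_eq_center {E : Type*} [NormedAddCommGroup E]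
    [NormedSpace ℝ E] [CompleteSpace E] [MeasurableSpace E] [BorelSpace E] {ν : Measure E}
    {j : ℝ → ℝ} {p : E → ℝ} {c : E} (hν : MeasurePreserving (pointReflection c) ν ν)
    (hp_symm : ∀ ω, p (pointReflection c ω) = p ω) (hp_nonneg : ∀ ω, 0 ≤ p ω)
    (hp_mass : 0 < ∫ ω, p ω ∂ν) (hj_pos : ∀ x, 0 ≤ x → 0 < j x)
    (hj_anti : AntitoneOn j (Set.Ici 0)) (hpost : Integrable (fun ω ↦ (j ‖c - ω‖ * p ω) • ω) ν) :
    weightedMean ν (fun ω ↦ j ‖c - ω‖ * p ω) = c := by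
  have hw : Integrable (fun ω ↦ j ‖c - ω‖ * p ω) ν :=
    integrable_comp_norm_sub_mul (fun x hx ↦ (hj_pos x hx).le) hj_anti
      (.of_integral_ne_zero hp_mass.ne') c
  have hmass : 0 < ∫ ω, j ‖c - ω‖ * p ω ∂ν :=
    integral_mul_pos_of_integral_pos (fun _ ↦ hj_pos _ (norm_nonneg _)) hp_nonneg hp_mass hw
  refine weightedMean_eq_of_comp_pointReflection hν hw hpost hmass.ne' fun ω ↦ ?_
  have hdist : c - pointReflection c ω = ω - c := by
    rw [pointReflection_eq_add_sub]
    abel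
  rw [hp_symm, hdist, norm_sub_rev]

variable {E : Type*} [NormedAddCommGroup E] [InnerProductSpace ℝ E] [CompleteSpace E]
  [MeasurableSpace E] [BorelSpace E] {ν : Measure E} {j : ℝ → ℝ} {p : E → ℝ} {c s : E}

theorem inner_weightedMean_sub_pos (hν : MeasurePreserving (pointReflection c) ν ν)
    (hp_symm : ∀ ω, p (pointReflection c ω) = p ω) (hp_nonneg : ∀ ω, 0 ≤ p ω)
    (hp_int : Integrable p ν) (hp_nondeg : 0 < ∫ ω in {ω | ⟪s - c, ω - c⟫ ≠ 0}, p ω ∂ν)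
    (hj_pos : ∀ x, 0 ≤ x → 0 < j x) (hj_anti : StrictAntiOn j (Set.Ici 0))
    (hpost : Integrable (fun ω ↦ (j ‖s - ω‖ * p ω) • ω) ν) :
    0 < ⟪s - c, weightedMean ν (fun ω ↦ j ‖s - ω‖ * p ω) - c⟫ := by
  have hw : Integrable (fun ω ↦ j ‖s - ω‖ * p ω) ν :=
    integrable_comp_norm_sub_mul (fun x hx ↦ (hj_pos x hx).le) hj_anti.antitoneOn hp_int s
  have hp_mass : 0 < ∫ ω, p ω ∂ν :=
    hp_nondeg.trans_le (setIntegral_le_integral hp_int (.of_forall hp_nonneg))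
  have hmass : 0 < ∫ ω, j ‖s - ω‖ * p ω ∂ν :=
    integral_mul_pos_of_integral_pos (fun _ ↦ hj_pos _ (norm_nonneg _)) hp_nonneg hp_mass hw
  have hfactor (ω : E) : (j ‖s - ω‖ * p ω - j ‖s - pointReflection c ω‖ *
      p (pointReflection c ω)) * innerSL ℝ (s - c) (ω - c) =
      (j ‖s - ω‖ - j ‖s - pointReflection c ω‖) * ⟪s - c, ω - c⟫ * p ω := by
    rw [hp_symm, innerSL_apply_apply]
    ring
  refine map_weightedMean_sub_pos (innerSL ℝ (s - c)) hν hw hpost hmass (fun ω ↦ ?_) ?_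
  · rw [hfactor]
    refine mul_nonneg ?_ (hp_nonneg ω)
    by_cases hω : ⟪s - c, ω - c⟫ = 0
    · rw [hω, mul_zero]
    · exact (sub_mul_inner_pos_of_strictAntiOn hj_anti hω).le
  · have hsupport : 0 < ν (Function.support p ∩ {ω | ⟪s - c, ω - c⟫ ≠ 0}) :=
      (setIntegral_pos_iff_support_of_nonneg_ae (.of_forall hp_nonneg) hp_int.integrableOn).1
        hp_nondeg
    refine hsupport.trans_le (measure_mono fun ω ⟨hpω, hω⟩ ↦ ?_)
    rw [Function.mem_support, hfactor]
    exact mul_ne_zero (sub_mul_inner_pos_of_strictAntiOn hj_anti hω).ne' hpω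

end RadialLikelihood

theorem stmt_16_general (ν : Measure ℝ) (ω0 s : ℝ) (p j : ℝ → ℝ)
    (hν : MeasurePreserving (pointReflection ω0) ν ν)
    (hp_symm : ∀ ω, p (pointReflection ω0 ω) = p ω) (hp_nonneg : ∀ ω, 0 ≤ p ω)
    (hp_int : Integrable p ν) (hp_nondeg : 0 < ∫ ω in {ω0}ᶜ, p ω ∂ν)
    (hj_pos : ∀ x, 0 ≤ x → 0 < j x) (hj_anti : StrictAntiOn j (Set.Ici 0))
    (hpost : Integrable (fun ω ↦ |ω| * (j |s - ω| * p ω)) ν) :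
    ((∫ ω, ω * (j |s - ω| * p ω) ∂ν) / (∫ ω, j |s - ω| * p ω ∂ν) > ω0 ↔ s > ω0) ∧
      (s = ω0 → (∫ ω, ω * (j |s - ω| * p ω) ∂ν) / (∫ ω, j |s - ω| * p ω ∂ν) = ω0) := by
  have hw : Integrable (fun ω ↦ j |s - ω| * p ω) ν :=
    integrable_comp_norm_sub_mul (fun x hx ↦ (hj_pos x hx).le) hj_anti.antitoneOn hp_int s
  have hwm : Integrable (fun ω ↦ (j |s - ω| * p ω) • ω) ν := by
    refine hpost.mono (hw.aestronglyMeasurable.smul aestronglyMeasurable_id) (.of_forall fun ω ↦ ?_)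
    simp [mul_comm]
  rw [← weightedMean_real ν fun ω ↦ j |s - ω| * p ω]
  have hcenter (hs : s = ω0) : weightedMean ν (fun ω ↦ j |s - ω| * p ω) = ω0 := by
    subst hs
    have hp_mass : 0 < ∫ ω, p ω ∂ν :=
      hp_nondeg.trans_le (setIntegral_le_integral hp_int (.of_forall hp_nonneg))
    exact weightedMean_comp_norm_sub_mul_eq_center hν hp_symm hp_nonneg hp_mass hj_pos
      hj_anti.antitoneOn hwm
  have hdirection (hs : s ≠ ω0) :
      0 < (weightedMean ν (fun ω ↦ j |s - ω| * p ω) - ω0) * (s - ω0) := by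
    refine inner_weightedMean_sub_pos hν hp_symm hp_nonneg hp_int ?_ hj_pos hj_anti hwm
    have hoff : {ω : ℝ | inner ℝ (s - ω0) (ω - ω0) ≠ 0} = {ω0}ᶜ := by
      ext ω
      simp [sub_eq_zero, hs]
    rwa [hoff]
  refine ⟨?_, hcenter⟩
  rcases eq_or_ne s ω0 with hs | hs
  · rw [hcenter hs, hs]
  · simpa only [sub_pos] using pos_iff_pos_of_mul_pos (hdirection hs)

/-- Lemma 7 (`lem:UDS`, updating in the direction of the signal): with a prior symmetric and
quasiconcave about `ω0` and a signal density symmetric about the state and strictly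
decreasing in the distance to it, the posterior mean exceeds `ω0` iff the signal does. -/
theorem stmt_16 (ω0 s : ℝ) (k j : ℝ → ℝ)
    (hk_nonneg : ∀ x : ℝ, 0 ≤ x → 0 ≤ k x)
    (hk_anti : AntitoneOn k (Set.Ici (0 : ℝ)))
    (hk_meas : Measurable k)
    (hμ_int : Integrable fun ω : ℝ => k |ω - ω0|)
    (hμ_prob : ∫ ω : ℝ, k |ω - ω0| = 1)
    (hμ_mean : Integrable fun ω : ℝ => |ω| * k |ω - ω0|)
    (hj_pos : ∀ x : ℝ, 0 ≤ x → 0 < j x)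
    (hj_anti : StrictAntiOn j (Set.Ici (0 : ℝ)))
    (hj_meas : Measurable j)
    (hpost_mean : Integrable fun ω : ℝ => |ω| * (j |s - ω| * k |ω - ω0|)) :
    ((∫ ω : ℝ, ω * (j |s - ω| * k |ω - ω0|)) /
        (∫ ω : ℝ, j |s - ω| * k |ω - ω0|) > ω0 ↔ s > ω0) ∧
    (s = ω0 →
      (∫ ω : ℝ, ω * (j |s - ω| * k |ω - ω0|)) /
          (∫ ω : ℝ, j |s - ω| * k |ω - ω0|) = ω0) :=
  stmt_16_general volume ω0 s (fun ω ↦ k |ω - ω0|) j (measurePreserving_pointReflection ω0)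
    (fun ω ↦ by simp [pointReflection_eq_add_sub, abs_sub_comm, add_sub_right_comm])
    (fun _ ↦ hk_nonneg _ (abs_nonneg _)) hμ_int (by simp [hμ_prob]) hj_pos hj_anti hpost_mean
end
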